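/- arXiv:1804.05559 — 5 statements merged into one kernel-verified Lean document; each statement's English description precedes it below -/
import Mathlib

section
/- For every integer n ≥ 3 and every index i ∈ {1,…,n-1}, the function j_i := ∂U/∂z_i is harmonic on the open upper half-space ℝ^n_+, and it satisfies the linearized boundary condition ∂j_i/∂t(z,0) + n · U(z,0)^{2/(n-2)} · j_i(z,0) = 0 for every z ∈ ℝ^{n-1}. -/
open MeasureTheory

noncomputable section

/-- Points of the upper half-space: a pair `(z, t)` with `z ∈ ℝ^{n-1}`, `t ∈ ℝ`. -/
abbrev Pt (n : ℕ) := EuclideanSpace ℝ (Fin (n - 1)) × ℝ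

/-- The standard bubble `U(z,t) = ((1+t)^2 + |z|^2)^{-(n-2)/2}`. -/
def stdBubble (n : ℕ) (p : Pt n) : ℝ :=
  ((1 + p.2) ^ 2 + ‖p.1‖ ^ 2) ^ (-(((n : ℝ) - 2) / 2))

/-- Directional (partial) derivative of `f` at `x` in the direction `v`. -/
def pd {E : Type*} [NormedAddCommGroup E] [NormedSpace ℝ E]
    (v : E) (f : E → ℝ) (x : E) : ℝ :=
  fderiv ℝ f x v

/-- The `i`-th horizontal coordinate direction. -/
def ez (n : ℕ) (i : Fin (n - 1)) : Pt n := (EuclideanSpace.single i 1, 0)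

/-- The vertical (`t`) coordinate direction. -/
def et (n : ℕ) : Pt n := (0, 1)

/-- The Euclidean Laplacian `Δf = Σ_i ∂²f/∂z_i² + ∂²f/∂t²`. -/
def lap (n : ℕ) (f : Pt n → ℝ) (p : Pt n) : ℝ :=
  (∑ i : Fin (n - 1), pd (ez n i) (pd (ez n i) f) p) + pd (et n) (pd (et n) f) p

open Topology

/-- Squared distance to the pole. -/
def QQ (n : ℕ) (p : Pt n) : ℝ := (1 + p.2) ^ 2 + ‖p.1‖ ^ 2

/-- Bilinear form on the product. -/
def BB (n : ℕ) (v w : Pt n) : ℝ := v.2 * w.2 + inner ℝ v.1 w.1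

/-- Affine form. -/
def LL (n : ℕ) (v p : Pt n) : ℝ := (1 + p.2) * v.2 + inner ℝ p.1 v.1

lemma QQ_pos {n : ℕ} {p : Pt n} (hp : -1 < p.2) : 0 < QQ n p := by
  unfold QQ
  have : 0 < (1 + p.2) ^ 2 := by apply pow_pos; linarith
  positivity

lemma hasFD_QQ (n : ℕ) (p : Pt n) : ∃ D : Pt n →L[ℝ] ℝ, HasFDerivAt (QQ n) D p ∧
    ∀ v, D v = 2 * LL n v p := by
  have h2 : HasFDerivAt (fun q : Pt n => q.2) (ContinuousLinearMap.snd ℝ _ _) p := hasFDerivAt_snd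
  have h1 : HasFDerivAt (fun q : Pt n => q.1) (ContinuousLinearMap.fst ℝ _ _) p := hasFDerivAt_fst
  refine ⟨_, ((h2.const_add 1).pow 2).add h1.norm_sq, ?_⟩
  intro v
  simp [LL]
  ring

lemma hasFD_LL (n : ℕ) (v p : Pt n) : ∃ D : Pt n →L[ℝ] ℝ, HasFDerivAt (LL n v) D p ∧
    ∀ w, D w = BB n v w := by
  have h2 : HasFDerivAt (fun q : Pt n => q.2) (ContinuousLinearMap.snd ℝ _ _) p := hasFDerivAt_snd
  have h1 : HasFDerivAt (fun q : Pt n => q.1) (ContinuousLinearMap.fst ℝ _ _) p := hasFDerivAt_fst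
  refine ⟨_, ((h2.const_add 1).mul_const v.2).add (h1.inner ℝ (hasFDerivAt_const v.1 p)), ?_⟩
  intro w
  simp [BB, real_inner_comm]

lemma pd_mul {n : ℕ} {p : Pt n} (hp : -1 < p.2) (c : ℝ) (P : Pt n → ℝ) (D : Pt n →L[ℝ] ℝ)
    (hP : HasFDerivAt P D p) (w : Pt n) :
    DifferentiableAt ℝ (fun q => P q * QQ n q ^ c) p ∧
    pd w (fun q => P q * QQ n q ^ c) p =
      D w * QQ n p ^ c + P p * (c * QQ n p ^ (c - 1) * (2 * LL n w p)) := by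
  obtain ⟨E, hE, hE'⟩ := hasFD_QQ n p
  have h := hP.mul (hE.rpow_const (p := c) (Or.inl (QQ_pos hp).ne'))
  refine ⟨h.differentiableAt, ?_⟩
  have h3 := h.fderiv
  unfold pd
  change fderiv ℝ (P * fun q => QQ n q ^ c) p w = _
  rw [h3]
  simp [hE']
  ring

lemma pd_congr {n : ℕ} {p : Pt n} (hp : -1 < p.2) {f g : Pt n → ℝ}
    (h : ∀ q : Pt n, -1 < q.2 → f q = g q) (w : Pt n) : pd w f p = pd w g p := by
  have : f =ᶠ[𝓝 p] g := by
    have ho : IsOpen {q : Pt n | -1 < q.2} := isOpen_lt continuous_const continuous_snd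
    filter_upwards [ho.mem_nhds hp] with q hq using h q hq
  unfold pd
  rw [this.fderiv_eq]

lemma pd1 {n : ℕ} (v : Pt n) (p : Pt n) (hp : -1 < p.2) :
    pd v (stdBubble n) p = (2 - (n : ℝ)) * LL n v p * QQ n p ^ (-(n : ℝ) / 2) := by
  have h := (pd_mul hp (-(((n : ℝ) - 2) / 2)) (fun _ => 1) _ (hasFDerivAt_const 1 p) v).2
  have e : stdBubble n = fun q => (1 : ℝ) * QQ n q ^ (-(((n : ℝ) - 2) / 2)) := by
    funext q; simp [stdBubble, QQ]
  rw [e, h]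
  rw [show -(((n : ℝ) - 2) / 2) - 1 = -(n : ℝ) / 2 by ring]
  simp
  ring

lemma pd2 {n : ℕ} (v w : Pt n) (p : Pt n) (hp : -1 < p.2) :
    pd w (pd v (stdBubble n)) p = (2 - (n : ℝ)) * (BB n v w * QQ n p ^ (-(n : ℝ) / 2)
      - n * (LL n v p * LL n w p) * QQ n p ^ (-(n : ℝ) / 2 - 1)) := by
  rw [pd_congr hp (fun q hq => pd1 v q hq)]
  obtain ⟨D, hD, hD'⟩ := hasFD_LL n v p
  rw [(pd_mul hp _ (fun q => (2 - (n : ℝ)) * LL n v q) _ (hD.const_mul _) w).2]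
  simp [hD']
  ring

lemma pd3 {n : ℕ} (v w : Pt n) (p : Pt n) (hp : -1 < p.2) :
    pd w (pd w (pd v (stdBubble n))) p = (2 - (n : ℝ)) * (-n) * QQ n p ^ (-(n : ℝ) / 2 - 2) *
      ((2 * BB n v w * LL n w p + BB n w w * LL n v p) * QQ n p
        - (n + 2) * LL n v p * LL n w p ^ 2) := by
  rw [pd_congr hp (fun q hq => pd2 v w q hq)]
  obtain ⟨D, hD, hD'⟩ := hasFD_LL n v p
  obtain ⟨E, hE, hE'⟩ := hasFD_LL n w p
  have h1 := pd_mul hp (-(n : ℝ) / 2) (fun _ => (2 - (n : ℝ)) * BB n v w) _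
    (hasFDerivAt_const _ p) w
  have h2 := pd_mul hp (-(n : ℝ) / 2 - 1) (fun q => (2 - (n : ℝ)) * (-n) * (LL n v q * LL n w q)) _
    ((hD.mul hE).const_mul _) w
  have e : (fun q : Pt n => (2 - (n : ℝ)) * (BB n v w * QQ n q ^ (-(n : ℝ) / 2)
      - n * (LL n v q * LL n w q) * QQ n q ^ (-(n : ℝ) / 2 - 1))) =
      (fun q => (2 - (n : ℝ)) * BB n v w * QQ n q ^ (-(n : ℝ) / 2)) +
      (fun q => (2 - (n : ℝ)) * (-n) * (LL n v q * LL n w q) * QQ n q ^ (-(n : ℝ) / 2 - 1)) := by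
    funext q; simp only [Pi.add_apply]; ring
  have hadd : pd w ((fun q => (2 - (n : ℝ)) * BB n v w * QQ n q ^ (-(n : ℝ) / 2)) +
      (fun q => (2 - (n : ℝ)) * (-n) * (LL n v q * LL n w q) * QQ n q ^ (-(n : ℝ) / 2 - 1))) p
      = pd w (fun q => (2 - (n : ℝ)) * BB n v w * QQ n q ^ (-(n : ℝ) / 2)) p +
      pd w (fun q => (2 - (n : ℝ)) * (-n) * (LL n v q * LL n w q) *
        QQ n q ^ (-(n : ℝ) / 2 - 1)) p := by
    unfold pd
    rw [fderiv_add h1.1 h2.1]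
    rfl
  rw [e, hadd, h1.2, h2.2]
  have hq := QQ_pos hp
  rw [show -(n : ℝ) / 2 - 1 = (-(n : ℝ) / 2 - 2) + 1 by ring, Real.rpow_add_one hq.ne']
  rw [show (-(n : ℝ) / 2 - 2) + 1 - 1 = (-(n : ℝ) / 2 - 2) by ring]
  simp [hD', hE']
  ring

/-- for each `i ∈ {1,…,n-1}`, `j_i = ∂U/∂z_i` is harmonic on the open
upper half-space and satisfies `∂j_i/∂t(z,0) + n U(z,0)^{2/(n-2)} j_i(z,0) = 0`. -/
theorem stmt1 (n : ℕ) (hn : 3 ≤ n) (i : Fin (n - 1)) :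
    (∀ p : Pt n, 0 < p.2 → lap n (pd (ez n i) (stdBubble n)) p = 0) ∧
    (∀ z : EuclideanSpace ℝ (Fin (n - 1)),
      pd (et n) (pd (ez n i) (stdBubble n)) (z, 0) +
        (n : ℝ) * (stdBubble n (z, 0)) ^ (2 / ((n : ℝ) - 2)) *
          pd (ez n i) (stdBubble n) (z, 0) = 0) := by
  have hn2 : (n : ℝ) - 2 ≠ 0 := by
    have : (3 : ℝ) ≤ n := by exact_mod_cast hn
    linarith
  constructor
  · intro p hp
    have hp' : -1 < p.2 := by linarith
    unfold lap
    simp only [pd3 _ _ p hp']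
    rw [← Finset.mul_sum, ← mul_add]
    apply mul_eq_zero_of_right
    have hL : ∀ k, LL n (ez n k) p = p.1 k := by
      intro k; simp [LL, ez, EuclideanSpace.inner_single_right]
    have hLt : LL n (et n) p = 1 + p.2 := by simp [LL, et]
    have hB : ∀ k, BB n (ez n i) (ez n k) = if i = k then 1 else 0 := by
      intro k
      simp [BB, ez, EuclideanSpace.inner_single_right, Pi.single_apply, eq_comm]
    have hBt : BB n (ez n i) (et n) = 0 := by simp [BB, ez, et]
    have hBtt : BB n (et n) (et n) = 1 := by simp [BB, et]
    have hBkk : ∀ k, BB n (ez n k) (ez n k) = 1 := by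
      intro k; simp [BB, ez]
    have hQ : QQ n p = (1 + p.2) ^ 2 + ∑ k, p.1 k ^ 2 := by
      simp [QQ, EuclideanSpace.norm_sq_eq]
    simp only [hL, hLt, hB, hBt, hBtt, hBkk]
    rw [Finset.sum_sub_distrib, ← Finset.mul_sum, ← Finset.sum_mul, Finset.sum_add_distrib]
    have hs : ∑ k, 2 * (if i = k then (1 : ℝ) else 0) * p.1 k = 2 * p.1 i := by
      simp
    rw [hs]
    have hc : ((n - 1 : ℕ) : ℝ) = n - 1 := by
      rw [Nat.cast_sub (by omega)]; simp
    simp only [Finset.sum_const, Finset.card_univ, Fintype.card_fin, nsmul_eq_mul, hc]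
    rw [hQ]
    ring
  · intro z
    have hp' : -1 < ((z, 0) : Pt n).2 := by norm_num
    have hq := QQ_pos hp'
    rw [pd2 _ _ _ hp', pd1 _ _ hp']
    have hBt : BB n (ez n i) (et n) = 0 := by simp [BB, ez, et]
    have hLt : LL n (et n) (z, 0) = 1 := by simp [LL, et]
    have hU : stdBubble n (z, 0) ^ (2 / ((n : ℝ) - 2)) = QQ n (z, 0) ^ (-1 : ℝ) := by
      change (QQ n (z, 0) ^ (-(((n : ℝ) - 2) / 2))) ^ (2 / ((n : ℝ) - 2)) = _
      rw [← Real.rpow_mul hq.le]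
      congr 1
      field_simp
    rw [hU, hBt, hLt, sub_eq_add_neg (-(n : ℝ) / 2) 1, Real.rpow_add hq]
    ring
end
end

section
/- For every integer n ≥ 7, the integrals I₁ = ∫_{ℝ^n_+} t² ((1+t)² + |z|²)^{-(n-2)} dz dt and I₂ = ∫_{ℝ^n_+} t² |z|⁴ ((1+t)² + |z|²)^{-n} dz dt are finite, and I₁ = (4(n-2)/(n+1)) · I₂. -/
open MeasureTheory

noncomputable section

/-- The open upper half-space. -/
def upperHalf (n : ℕ) : Set (Pt n) := {p | 0 < p.2}


lemma aux_le (S x y : ℝ) (hS : 0 < S) (k : ℕ) (hxS : x ≤ S) (hy : y = 1 / S ^ k) :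
    x / S ^ (k+1) ≤ y := by
  subst hy
  rw [div_le_div_iff₀ (by positivity) (by positivity), pow_succ]
  have : 0 < S ^ k := by positivity
  nlinarith

lemma rpow_conv (x : ℝ) (k : ℕ) : ((1 + x^2) ^ (-(2 * (k:ℝ)) / 2) : ℝ) = 1 / (1+x^2)^k := by
  have : (-(2 * (k:ℝ)) / 2) = -(k:ℝ) := by ring
  rw [this, Real.rpow_neg (by positivity), Real.rpow_natCast, one_div]

lemma int_fiber1 (k : ℕ) (hk : 5 ≤ k) (a : ℝ) (ha : 1 ≤ a) :
    Integrable (fun z : EuclideanSpace ℝ (Fin (k+1)) => 1 / (a ^ 2 + ‖z‖ ^ 2) ^ k) := by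
  have h := integrable_rpow_neg_one_add_norm_sq (E := EuclideanSpace ℝ (Fin (k+1)))
    (μ := volume) (r := 2 * (k:ℝ)) (by
      simp only [finrank_euclideanSpace, Fintype.card_fin]; push_cast
      have : (5:ℝ) ≤ k := by exact_mod_cast hk
      linarith)
  simp only [rpow_conv] at h
  refine h.mono (Measurable.aestronglyMeasurable (by fun_prop)) (ae_of_all _ fun z => ?_)
  rw [Real.norm_of_nonneg (by positivity), Real.norm_of_nonneg (by positivity)]
  gcongr
  nlinarith

lemma int_fiber2 (k : ℕ) (hk : 5 ≤ k) (a : ℝ) (ha : 1 ≤ a) :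
    Integrable (fun z : EuclideanSpace ℝ (Fin (k+1)) =>
      ‖z‖ ^ 4 / (a ^ 2 + ‖z‖ ^ 2) ^ (k+2)) := by
  refine (int_fiber1 k hk a ha).mono (Measurable.aestronglyMeasurable (by fun_prop))
    (ae_of_all _ fun z => ?_)
  rw [Real.norm_of_nonneg (by positivity), Real.norm_of_nonneg (by positivity)]
  have hS : 0 < a ^ 2 + ‖z‖ ^ 2 := by positivity
  rw [div_le_div_iff₀ (by positivity) (by positivity), pow_add, one_mul, mul_comm]
  gcongr
  nlinarith [sq_nonneg ‖z‖, sq_nonneg a, mul_nonneg (sq_nonneg ‖z‖) (sq_nonneg a)]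

lemma tends (k : ℕ) (hk : 5 ≤ k) (a : ℝ) (ha : 1 ≤ a) :
    Filter.Tendsto (fun r : ℝ => r ^ (k+1) / (a ^ 2 + r ^ 2) ^ k) Filter.atTop (nhds 0) := by
  refine squeeze_zero' (g := fun r : ℝ => 1 / r) ?_ ?_ ?_
  · filter_upwards [Filter.eventually_ge_atTop 1] with r hr
    positivity
  · filter_upwards [Filter.eventually_ge_atTop 1] with r hr
    rw [div_le_div_iff₀ (by positivity) (by positivity), ← pow_succ, one_mul]
    calc r ^ (k+1+1) ≤ r ^ (2*k) := pow_le_pow_right₀ hr (by omega)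
      _ = (r^2)^k := pow_mul _ _ _
      _ ≤ _ := by gcongr; nlinarith
  · simpa using tendsto_inv_atTop_zero (𝕜 := ℝ)

lemma tends2 (k : ℕ) (hk : 5 ≤ k) (a : ℝ) (ha : 1 ≤ a) :
    Filter.Tendsto (fun r : ℝ => r ^ (k+3) / (a ^ 2 + r ^ 2) ^ (k+1)) Filter.atTop (nhds 0) := by
  refine squeeze_zero' ?_ ?_ (tends k hk a ha)
  · filter_upwards [Filter.eventually_ge_atTop 1] with r hr
    positivity
  · filter_upwards [Filter.eventually_ge_atTop 1] with r hr
    rw [div_le_div_iff₀ (by positivity) (by positivity)]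
    have : r ^ (k+3) * (a^2+r^2)^k = (r^(k+1) * (a^2+r^2)^k) * r^2 := by ring
    rw [this, pow_succ (a^2+r^2), ← mul_assoc]
    gcongr
    nlinarith

lemma oned (k : ℕ) (hk : 5 ≤ k) (a : ℝ) (ha : 1 ≤ a)
    (h1 : IntegrableOn (fun r : ℝ => r ^ k * (1 / (a ^ 2 + r ^ 2) ^ k)) (Set.Ioi 0))
    (h2 : IntegrableOn (fun r : ℝ => r ^ k * (r ^ 4 / (a ^ 2 + r ^ 2) ^ (k+2))) (Set.Ioi 0)) :
    ∫ r in Set.Ioi (0:ℝ), r ^ k * (1 / (a ^ 2 + r ^ 2) ^ k) =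
    (4 * (k:ℝ) / ((k:ℝ)+3)) * ∫ r in Set.Ioi (0:ℝ), r ^ k * (r ^ 4 / (a ^ 2 + r ^ 2) ^ (k+2)) := by
  rw [← sub_eq_zero, ← integral_const_mul, ← integral_sub h1 (h2.const_mul _)]
  have key := integral_Ioi_of_hasDerivAt_of_tendsto' (a := (0:ℝ)) (m := 0)
    (f := fun r : ℝ => (1/((k:ℝ)+1)) * (r ^ (k+1) / (a ^ 2 + r ^ 2) ^ k) +
      (2*(k:ℝ)/(((k:ℝ)+1)*((k:ℝ)+3))) * (r ^ (k+3) / (a ^ 2 + r ^ 2) ^ (k+1)))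
    (f' := fun r : ℝ => r ^ k * (1 / (a ^ 2 + r ^ 2) ^ k) -
      (4 * (k:ℝ) / ((k:ℝ)+3)) * (r ^ k * (r ^ 4 / (a ^ 2 + r ^ 2) ^ (k+2)))) ?_
    (h1.sub (h2.const_mul _)) ?_
  · rw [key]; simp
  · intro r _
    have hS : a ^ 2 + r ^ 2 ≠ 0 := by positivity
    have hd : HasDerivAt (fun r : ℝ => a ^ 2 + r ^ 2) (2 * r) r := by
      simpa using (hasDerivAt_pow 2 r).const_add (a^2)
    have e := ((((hasDerivAt_pow (k+1) r).div (hd.pow k) (pow_ne_zero _ hS)).const_mul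
        (1/((k:ℝ)+1)))).add
      ((((hasDerivAt_pow (k+3) r).div (hd.pow (k+1)) (pow_ne_zero _ hS)).const_mul
        (2*(k:ℝ)/(((k:ℝ)+1)*((k:ℝ)+3)))))
    refine e.congr_deriv ?_
    simp only [Pi.pow_apply]
    obtain ⟨j, rfl⟩ : ∃ j, k = j + 1 := ⟨k-1, by omega⟩
    have e1 : j + 1 + 1 - 1 = j + 1 := by omega
    have e2 : j + 1 - 1 = j := by omega
    have e3 : j + 1 + 3 - 1 = j + 3 := by omega
    simp only [e1, e2, e3]
    push_cast
    generalize a ^ 2 + r ^ 2 = S at hS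
    field_simp
    ring
  · simpa using ((tends k hk a ha).const_mul (1/((k:ℝ)+1))).add
      ((tends2 k hk a ha).const_mul (2*(k:ℝ)/(((k:ℝ)+1)*((k:ℝ)+3))))

lemma fiber (k : ℕ) (hk : 5 ≤ k) (a : ℝ) (ha : 1 ≤ a) :
    ∫ z : EuclideanSpace ℝ (Fin (k+1)), 1 / (a ^ 2 + ‖z‖ ^ 2) ^ k =
    (4 * (k:ℝ) / ((k:ℝ)+3)) *
      ∫ z : EuclideanSpace ℝ (Fin (k+1)), ‖z‖ ^ 4 / (a ^ 2 + ‖z‖ ^ 2) ^ (k+2) := by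
  have h1 := int_fiber1 k hk a ha
  have h2 := int_fiber2 k hk a ha
  rw [integrable_fun_norm_addHaar (volume : Measure (EuclideanSpace ℝ (Fin (k+1))))
    (f := fun r : ℝ => 1 / (a ^ 2 + r ^ 2) ^ k)] at h1
  rw [integrable_fun_norm_addHaar (volume : Measure (EuclideanSpace ℝ (Fin (k+1))))
    (f := fun r : ℝ => r ^ 4 / (a ^ 2 + r ^ 2) ^ (k+2))] at h2
  rw [integral_fun_norm_addHaar (volume : Measure (EuclideanSpace ℝ (Fin (k+1))))
    (fun r : ℝ => 1 / (a ^ 2 + r ^ 2) ^ k),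
    integral_fun_norm_addHaar (volume : Measure (EuclideanSpace ℝ (Fin (k+1))))
    (fun r : ℝ => r ^ 4 / (a ^ 2 + r ^ 2) ^ (k+2))]
  simp only [finrank_euclideanSpace, Fintype.card_fin, Nat.add_sub_cancel, smul_eq_mul,
    nsmul_eq_mul] at h1 h2 ⊢
  rw [oned k hk a ha h1 h2]
  ring

lemma int_base (k : ℕ) (hk : 5 ≤ k) :
    IntegrableOn (fun p : EuclideanSpace ℝ (Fin (k+1)) × ℝ =>
      1 / ((1 + p.2) ^ 2 + ‖p.1‖ ^ 2) ^ (k-1)) {p | 0 < p.2} volume := by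
  have : (volume : Measure (EuclideanSpace ℝ (Fin (k+1)) × ℝ)).IsAddHaarMeasure := by
    rw [Measure.volume_eq_prod]; infer_instance
  have h := integrable_rpow_neg_one_add_norm_sq (E := EuclideanSpace ℝ (Fin (k+1)) × ℝ)
    (μ := volume) (r := 2 * ((k-1 : ℕ):ℝ)) (by
      simp only [Module.finrank_prod, Module.finrank_self, finrank_euclideanSpace,
        Fintype.card_fin]
      norm_cast
      omega)
  simp only [rpow_conv] at h
  refine Integrable.mono h.integrableOn ?_ ?_
  · exact Measurable.aestronglyMeasurable (by fun_prop)
  refine (ae_restrict_iff' (measurableSet_lt measurable_const measurable_snd)).2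
    (ae_of_all _ fun p hp => ?_)
  have hp : 0 < p.2 := hp
  rw [Real.norm_of_nonneg (by positivity), Real.norm_of_nonneg (by positivity)]
  refine one_div_le_one_div_of_le (by positivity) (pow_le_pow_left₀ (by positivity) ?_ _)
  rw [Prod.norm_def]
  rcases max_choice ‖p.1‖ ‖p.2‖ with h | h <;> rw [h]
  · nlinarith
  · rw [Real.norm_eq_abs, sq_abs]
    nlinarith [sq_nonneg ‖p.1‖]

lemma int_one (k : ℕ) (hk : 5 ≤ k) :
    IntegrableOn (fun p : EuclideanSpace ℝ (Fin (k+1)) × ℝ =>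
      p.2 ^ 2 / ((1 + p.2) ^ 2 + ‖p.1‖ ^ 2) ^ k) {p | 0 < p.2} volume := by
  refine Integrable.mono (int_base k hk) ?_ ?_
  · exact Measurable.aestronglyMeasurable (by fun_prop)
  refine (ae_restrict_iff' (measurableSet_lt measurable_const measurable_snd)).2
    (ae_of_all _ fun p hp => ?_)
  have hp : 0 < p.2 := hp
  rw [Real.norm_of_nonneg (by positivity), Real.norm_of_nonneg (by positivity)]
  obtain ⟨j, rfl⟩ : ∃ j, k = j + 1 := ⟨k-1, by omega⟩
  exact aux_le _ _ _ (by positivity) j (by nlinarith [sq_nonneg ‖p.1‖]) rfl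

lemma int_two (k : ℕ) (hk : 5 ≤ k) :
    IntegrableOn (fun p : EuclideanSpace ℝ (Fin (k+1)) × ℝ =>
      p.2 ^ 2 * ‖p.1‖ ^ 4 / ((1 + p.2) ^ 2 + ‖p.1‖ ^ 2) ^ (k+2)) {p | 0 < p.2} volume := by
  refine Integrable.mono (int_one k hk) ?_ ?_
  · exact Measurable.aestronglyMeasurable (by fun_prop)
  refine (ae_restrict_iff' (measurableSet_lt measurable_const measurable_snd)).2
    (ae_of_all _ fun p hp => ?_)
  have hp : 0 < p.2 := hp
  rw [Real.norm_of_nonneg (by positivity), Real.norm_of_nonneg (by positivity)]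
  have hS : 0 < (1 + p.2) ^ 2 + ‖p.1‖ ^ 2 := by positivity
  rw [div_le_div_iff₀ (by positivity) (by positivity), pow_add, mul_assoc,
    mul_comm (_ ^ k) (_ ^ 2)]
  gcongr
  nlinarith [sq_nonneg ‖p.1‖, sq_nonneg (1+p.2),
    mul_nonneg (sq_nonneg ‖p.1‖) (sq_nonneg (1+p.2))]

lemma main_eq (k : ℕ) (hk : 5 ≤ k) :
    (∫ p in {p : EuclideanSpace ℝ (Fin (k+1)) × ℝ | 0 < p.2},
      p.2 ^ 2 / ((1 + p.2) ^ 2 + ‖p.1‖ ^ 2) ^ k) =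
    (4 * (k:ℝ) / ((k:ℝ)+3)) * ∫ p in {p : EuclideanSpace ℝ (Fin (k+1)) × ℝ | 0 < p.2},
      p.2 ^ 2 * ‖p.1‖ ^ 4 / ((1 + p.2) ^ 2 + ‖p.1‖ ^ 2) ^ (k+2) := by
  have h1 := int_one k hk
  have h2 := int_two k hk
  have hset : {p : EuclideanSpace ℝ (Fin (k+1)) × ℝ | 0 < p.2} = Set.univ ×ˢ Set.Ioi 0 := by
    ext p; simp
  rw [hset] at h1 h2 ⊢
  have hm : (volume : Measure (EuclideanSpace ℝ (Fin (k+1)) × ℝ)).restrict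
      (Set.univ ×ˢ Set.Ioi 0) = (volume : Measure (EuclideanSpace ℝ (Fin (k+1)))).prod
        ((volume : Measure ℝ).restrict (Set.Ioi 0)) := by
    rw [Measure.volume_eq_prod, ← Measure.prod_restrict, Measure.restrict_univ]
  unfold IntegrableOn at h1 h2
  rw [hm] at h1 h2 ⊢
  rw [integral_prod_symm _ h1, integral_prod_symm _ h2, ← integral_const_mul]
  refine setIntegral_congr_fun measurableSet_Ioi fun t ht => ?_
  have ht : 0 < t := ht
  have := fiber k hk (1+t) (by linarith)
  simp only
  have e1 : ∀ z : EuclideanSpace ℝ (Fin (k+1)), t ^ 2 / ((1 + t) ^ 2 + ‖z‖ ^ 2) ^ k =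
    t ^ 2 * (1 / ((1 + t) ^ 2 + ‖z‖ ^ 2) ^ k) := fun z => by ring
  simp only [e1, mul_div_assoc (t^2), integral_const_mul]
  rw [this]
  ring

/-- for `n ≥ 7`, the integrals
`I₁ = ∫_{ℝ^n_+} t² ((1+t)²+|z|²)^{-(n-2)}` and
`I₂ = ∫_{ℝ^n_+} t² |z|⁴ ((1+t)²+|z|²)^{-n}` are finite and
`I₁ = (4(n-2)/(n+1)) I₂`. -/
theorem stmt4 (n : ℕ) (hn : 7 ≤ n) :
    IntegrableOn
      (fun p : Pt n => p.2 ^ 2 / ((1 + p.2) ^ 2 + ‖p.1‖ ^ 2) ^ (n - 2))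
      (upperHalf n) volume ∧
    IntegrableOn
      (fun p : Pt n => p.2 ^ 2 * ‖p.1‖ ^ 4 / ((1 + p.2) ^ 2 + ‖p.1‖ ^ 2) ^ n)
      (upperHalf n) volume ∧
    (∫ p in upperHalf n, p.2 ^ 2 / ((1 + p.2) ^ 2 + ‖p.1‖ ^ 2) ^ (n - 2)) =
      (4 * ((n : ℝ) - 2) / ((n : ℝ) + 1)) *
        ∫ p in upperHalf n, p.2 ^ 2 * ‖p.1‖ ^ 4 / ((1 + p.2) ^ 2 + ‖p.1‖ ^ 2) ^ n := by
  obtain ⟨k, rfl⟩ : ∃ k, n = k + 2 := ⟨n - 2, by omega⟩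
  refine ⟨int_one k (by omega), int_two k (by omega), ?_⟩
  have h := main_eq k (by omega)
  have e : (4 * (((k + 2 : ℕ) : ℝ) - 2) / (((k + 2 : ℕ) : ℝ) + 1)) =
      4 * (k:ℝ) / ((k:ℝ)+3) := by
    push_cast; congr 1 <;> ring
  rw [e]
  exact h
end
end

section
/- For every integer n ≥ 7, the integrals I₃ = ∫_{ℝ^n_+} t⁴ |z|² ((1+t)² + |z|²)^{-n} dz dt and I₂ = ∫_{ℝ^n_+} t² |z|⁴ ((1+t)² + |z|²)^{-n} dz dt are finite, and I₃ = (12/((n-2)(n+1))) · I₂. -/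
open MeasureTheory

noncomputable section

open Set Filter Topology

lemma aux_pow_le {r : ℝ} (hr : 0 ≤ r) {a b : ℕ} (h : a ≤ 2 * b) : r ^ a ≤ (1 + r ^ 2) ^ b := by
  rcases le_total r 1 with h1 | h1
  · exact (pow_le_one₀ hr h1).trans (one_le_pow₀ (by nlinarith [sq_nonneg r]))
  · calc r ^ a ≤ r ^ (2 * b) := pow_le_pow_right₀ h1 h
      _ = (r ^ 2) ^ b := pow_mul _ _ _
      _ ≤ _ := by gcongr; linarith

lemma aux_rad_le {r : ℝ} (hr : 0 ≤ r) {a b : ℕ} (h : a ≤ 2 * b) :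
    r ^ a / (1 + r ^ 2) ^ (b + 1) ≤ (1 + r ^ 2)⁻¹ := by
  have := aux_pow_le hr h
  have h0 : (1 + r ^ 2) ≠ 0 := by positivity
  rw [div_le_iff₀ (by positivity), pow_succ' (1 + r ^ 2), inv_mul_cancel_left₀ h0]
  exact this

lemma aux_t_le {t : ℝ} (ht : 0 ≤ t) {a b : ℕ} (h : a ≤ b) (c : ℕ) :
    t ^ a / (1 + t) ^ (b + c) ≤ ((1 + t) ^ c)⁻¹ := by
  have : t ^ a ≤ (1 + t) ^ b :=
    (pow_le_pow_left₀ ht (by linarith) a).trans (pow_le_pow_right₀ (by linarith) h)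
  have h0 : (1 + t) ^ c ≠ 0 := by positivity
  rw [div_le_iff₀ (by positivity), pow_add, mul_comm ((1 + t) ^ b), inv_mul_cancel_left₀ h0]
  exact this

lemma aux_rad_int {a b : ℕ} (h : a ≤ 2 * b) :
    IntegrableOn (fun r : ℝ => r ^ a / (1 + r ^ 2) ^ (b + 1)) (Ioi 0) := by
  refine Integrable.mono' (integrable_inv_one_add_sq.integrableOn (s := Ioi 0)) ?_ ?_
  · exact (Continuous.div (by fun_prop) (by fun_prop) (fun x => by positivity)).aestronglyMeasurable
  · filter_upwards [ae_restrict_mem measurableSet_Ioi] with r hr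
    have hr : 0 < r := hr
    rw [Real.norm_of_nonneg (by positivity)]
    exact aux_rad_le hr.le h

lemma aux_t_int {a b : ℕ} (h : a + 2 ≤ b) :
    IntegrableOn (fun r : ℝ => r ^ a / (1 + r) ^ b) (Ioi 0) := by
  obtain ⟨c, rfl⟩ := Nat.exists_eq_add_of_le h
  refine Integrable.mono' (integrable_inv_one_add_sq.integrableOn (s := Ioi 0)) ?_ ?_
  · exact (by fun_prop : Measurable (fun r : ℝ => r ^ a / (1 + r) ^ (a + 2 + c))).aestronglyMeasurable
  · filter_upwards [ae_restrict_mem measurableSet_Ioi] with r hr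
    have hr : 0 < r := hr
    rw [Real.norm_of_nonneg (by positivity), show a + 2 + c = (a + c) + 2 by ring]
    refine (aux_t_le hr.le (Nat.le_add_right a c) 2).trans ?_
    gcongr
    nlinarith

/-- the radial identity -/
lemma aux_rad_eq (m : ℕ) :
    ((m : ℝ) + 8) * (∫ r in Ioi (0:ℝ), r ^ (m + 7) / (1 + r ^ 2) ^ (m + 7)) =
    ((m : ℝ) + 4) * (∫ r in Ioi (0:ℝ), r ^ (m + 9) / (1 + r ^ 2) ^ (m + 7)) := by
  have i1 := aux_rad_int (a := m + 7) (b := m + 6) (by omega)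
  have i2 := aux_rad_int (a := m + 9) (b := m + 6) (by omega)
  have key := integral_Ioi_of_hasDerivAt_of_tendsto' (a := (0:ℝ)) (m := 0)
    (f := fun r : ℝ => r ^ (m + 8) / (1 + r ^ 2) ^ (m + 6))
    (f' := fun r : ℝ => ((m : ℝ) + 8) * (r ^ (m + 7) / (1 + r ^ 2) ^ (m + 7))
      - ((m : ℝ) + 4) * (r ^ (m + 9) / (1 + r ^ 2) ^ (m + 7))) ?_ ?_ ?_
  · rw [integral_sub (i1.const_mul _) (i2.const_mul _), integral_const_mul,
      integral_const_mul] at key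
    simp at key
    linarith
  · intro r _
    have h0 : (1 + r ^ 2) ≠ 0 := by positivity
    have hd := (hasDerivAt_pow (m + 8) r).div
      ((((hasDerivAt_pow 2 r).const_add 1)).pow (m + 6)) (pow_ne_zero _ h0)
    refine hd.congr_deriv ?_
    have e1 : m + 8 - 1 = m + 7 := rfl
    have e2 : m + 6 - 1 = m + 5 := rfl
    simp only [e1, e2, Pi.pow_apply]
    push_cast
    field_simp
    ring
  · exact (i1.const_mul _).sub (i2.const_mul _)
  · have : Tendsto (fun r : ℝ => (1 + r ^ 2)⁻¹) atTop (𝓝 0) :=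
      tendsto_inv_atTop_zero.comp
        (tendsto_atTop_add_const_left _ _ (tendsto_pow_atTop (by norm_num)))
    refine squeeze_zero' ?_ ?_ this
    · filter_upwards [eventually_ge_atTop 0] with r hr
      positivity
    · filter_upwards [eventually_ge_atTop 0] with r hr
      exact aux_rad_le (b := m + 5) hr (by omega)

/-- the identity in `t` -/
lemma aux_t_eq (m : ℕ) :
    ((m : ℝ) + 5) * ((m : ℝ) + 4) * (∫ t in Ioi (0:ℝ), t ^ 4 / (1 + t) ^ (m + 6)) =
    12 * (∫ t in Ioi (0:ℝ), t ^ 2 / (1 + t) ^ (m + 4)) := by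
  have i1 := aux_t_int (a := 4) (b := m + 6) (by omega)
  have i2 := aux_t_int (a := 2) (b := m + 4) (by omega)
  have key := integral_Ioi_of_hasDerivAt_of_tendsto' (a := (0:ℝ)) (m := 0)
    (f := fun t : ℝ => -4 * (t ^ 3 / (1 + t) ^ (m + 5)) - ((m : ℝ) + 8) * (t ^ 4 / (1 + t) ^ (m + 5)))
    (f' := fun t : ℝ => ((m : ℝ) + 5) * ((m : ℝ) + 4) * (t ^ 4 / (1 + t) ^ (m + 6))
      - 12 * (t ^ 2 / (1 + t) ^ (m + 4))) ?_ ?_ ?_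
  · rw [integral_sub (i1.const_mul _) (i2.const_mul _), integral_const_mul,
      integral_const_mul] at key
    simp at key
    linarith
  · intro t ht
    have ht : 0 ≤ t := ht
    have h0 : (1 + t) ≠ 0 := by positivity
    have hp := (((hasDerivAt_id t).const_add 1)).pow (m + 5)
    have hd := (((hasDerivAt_pow 3 t).div hp (pow_ne_zero _ h0)).const_mul (-4)).sub
      (((hasDerivAt_pow 4 t).div hp (pow_ne_zero _ h0)).const_mul ((m : ℝ) + 8))
    refine hd.congr_deriv ?_
    have e2 : m + 5 - 1 = m + 4 := rfl
    simp only [e2, Pi.pow_apply, id]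
    push_cast
    field_simp
    ring
  · exact (i1.const_mul _).sub (i2.const_mul _)
  · have h0 : Tendsto (fun r : ℝ => ((1 + r) ^ 1)⁻¹) atTop (𝓝 0) := by
      simp only [pow_one]
      exact tendsto_inv_atTop_zero.comp (tendsto_atTop_add_const_left _ _ tendsto_id)
    have h1 : ∀ j ≤ 4, Tendsto (fun t : ℝ => t ^ j / (1 + t) ^ (m + 5)) atTop (𝓝 0) := by
      intro j hj
      refine squeeze_zero' ?_ ?_ h0
      · filter_upwards [eventually_ge_atTop 0] with r hr
        positivity
      · filter_upwards [eventually_ge_atTop 0] with r hr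
        exact aux_t_le (b := m + 4) hr (by omega) 1
    simpa using ((h1 3 (by norm_num)).const_mul (-4)).sub
      ((h1 4 (by norm_num)).const_mul ((m : ℝ) + 8))

section
variable {E : Type*} [NormedAddCommGroup E] [InnerProductSpace ℝ E] [FiniteDimensional ℝ E]
  [MeasurableSpace E] [BorelSpace E]

lemma aux_main (m k j p : ℕ) (hE : Module.finrank ℝ E = m + 6) (hk : k ≤ 2)
    (hp : p + 2 * k = m + 8) (hj : j + 2 ≤ p) :
    IntegrableOn (fun q : E × ℝ => q.2 ^ j * ‖q.1‖ ^ (2 * k) / ((1 + q.2) ^ 2 + ‖q.1‖ ^ 2) ^ (m + 7))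
      {q | 0 < q.2} volume ∧
    (∫ q in {q : E × ℝ | 0 < q.2}, q.2 ^ j * ‖q.1‖ ^ (2 * k) / ((1 + q.2) ^ 2 + ‖q.1‖ ^ 2) ^ (m + 7))
     = ((m + 6 : ℕ) : ℝ) * (volume.real (Metric.ball (0 : E) 1) *
        ∫ r in Ioi (0:ℝ), r ^ (m + 5 + 2 * k) / (1 + r ^ 2) ^ (m + 7)) *
        ∫ t in Ioi (0:ℝ), t ^ j / (1 + t) ^ p := by
  have hset : {q : E × ℝ | 0 < q.2} = univ ×ˢ Ioi 0 := by ext; simp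
  have hmeas : (volume : Measure (E × ℝ)).restrict {q : E × ℝ | 0 < q.2} =
      (volume : Measure E).prod (volume.restrict (Ioi (0:ℝ))) := by
    rw [hset, Measure.volume_eq_prod, ← Measure.prod_restrict, Measure.restrict_univ]
  have : Nontrivial E := Module.nontrivial_of_finrank_pos (R := ℝ) (by omega)
  set g : ℝ → ℝ := fun r => r ^ (2 * k) / (1 + r ^ 2) ^ (m + 7) with hg
  have hrad : ∀ y : ℝ, y ^ (Module.finrank ℝ E - 1) • g y
      = y ^ (m + 5 + 2 * k) / (1 + y ^ 2) ^ (m + 7) := by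
    intro y
    rw [hE, show m + 6 - 1 = m + 5 from rfl, smul_eq_mul, hg, pow_add y (m + 5), mul_div_assoc]
  have gint : Integrable (fun z : E => g ‖z‖) volume := by
    rw [integrable_fun_norm_addHaar volume (f := g)]
    simp only [hrad]
    exact aux_rad_int (b := m + 6) (by omega)
  have gval := integral_fun_norm_addHaar (volume : Measure E) g
  simp only [hrad] at gval
  rw [hE, nsmul_eq_mul, smul_eq_mul] at gval
  have hscale : ∀ t : ℝ, 0 < t → ∀ z : E,
      t ^ j * ‖z‖ ^ (2 * k) / ((1 + t) ^ 2 + ‖z‖ ^ 2) ^ (m + 7)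
       = (t ^ j * (1 + t) ^ (2 * k) / (1 + t) ^ (2 * (m + 7))) * g ‖(1 + t)⁻¹ • z‖ := by
    intro t ht z
    have h1 : 0 < 1 + t := by linarith
    have h2 : (1 + t) ^ 2 + ‖z‖ ^ 2 = (1 + t) ^ 2 * (1 + (‖z‖ / (1 + t)) ^ 2) := by
      field_simp
    rw [norm_smul, norm_inv, Real.norm_of_nonneg h1.le, inv_mul_eq_div, h2, mul_pow, hg,
      ← pow_mul]
    simp only
    rw [div_pow ‖z‖ _ (2 * k)]
    have h3 : (1 + (‖z‖ / (1 + t)) ^ 2) ≠ 0 := by positivity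
    generalize (1 + (‖z‖ / (1 + t)) ^ 2) = X at *
    field_simp
  have hzint : ∀ t : ℝ, 0 < t → Integrable (fun z : E =>
      t ^ j * ‖z‖ ^ (2 * k) / ((1 + t) ^ 2 + ‖z‖ ^ 2) ^ (m + 7)) volume := by
    intro t ht
    simp only [hscale t ht]
    exact ((integrable_comp_smul_iff volume (fun z : E => g ‖z‖)
      (R := (1 + t)⁻¹) (by positivity)).2 gint).const_mul _
  have hzval : ∀ t : ℝ, 0 < t → (∫ z : E,
      t ^ j * ‖z‖ ^ (2 * k) / ((1 + t) ^ 2 + ‖z‖ ^ 2) ^ (m + 7)) =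
      (∫ z : E, g ‖z‖) * (t ^ j / (1 + t) ^ p) := by
    intro t ht
    simp only [hscale t ht]
    have h1 : 0 < 1 + t := by linarith
    rw [integral_const_mul, Measure.integral_comp_inv_smul_of_nonneg volume
      (fun z : E => g ‖z‖) h1.le, hE, smul_eq_mul]
    have h4 : t ^ j * (1 + t) ^ (2 * k) / (1 + t) ^ (2 * (m + 7)) * (1 + t) ^ (m + 6)
        = t ^ j / (1 + t) ^ p := by
      rw [div_mul_eq_mul_div, div_eq_div_iff (by positivity) (by positivity), mul_assoc, mul_assoc,
        ← pow_add, ← pow_add]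
      congr 2
      omega
    rw [← h4]
    ring
  have hI : Integrable (fun q : E × ℝ =>
      q.2 ^ j * ‖q.1‖ ^ (2 * k) / ((1 + q.2) ^ 2 + ‖q.1‖ ^ 2) ^ (m + 7))
      ((volume : Measure E).prod (volume.restrict (Ioi (0:ℝ)))) := by
    rw [integrable_prod_iff' (by
      exact (by fun_prop : Measurable (fun q : E × ℝ =>
        q.2 ^ j * ‖q.1‖ ^ (2 * k) / ((1 + q.2) ^ 2 + ‖q.1‖ ^ 2) ^ (m + 7))).aestronglyMeasurable)]
    constructor
    · filter_upwards [ae_restrict_mem measurableSet_Ioi] with t ht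
      exact hzint t ht
    · refine ((aux_t_int hj).const_mul (∫ z : E, g ‖z‖)).congr ?_
      filter_upwards [ae_restrict_mem measurableSet_Ioi] with t ht
      have ht : 0 < t := ht
      rw [← hzval t ht]
      refine integral_congr_ae (Eventually.of_forall fun z => ?_)
      simp only
      rw [Real.norm_of_nonneg (by positivity)]
  refine ⟨by rw [IntegrableOn, hmeas]; exact hI, ?_⟩
  rw [hmeas, integral_prod_symm _ hI, setIntegral_congr_fun measurableSet_Ioi
    (fun t ht => hzval t ht), integral_const_mul, gval]

end

/-- for `n ≥ 7`, the integrals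
`I₃ = ∫_{ℝ^n_+} t⁴ |z|² ((1+t)²+|z|²)^{-n}` and
`I₂ = ∫_{ℝ^n_+} t² |z|⁴ ((1+t)²+|z|²)^{-n}` are finite and
`I₃ = (12/((n-2)(n+1))) I₂`. -/
theorem stmt5 (n : ℕ) (hn : 7 ≤ n) :
    IntegrableOn
      (fun p : Pt n => p.2 ^ 4 * ‖p.1‖ ^ 2 / ((1 + p.2) ^ 2 + ‖p.1‖ ^ 2) ^ n)
      (upperHalf n) volume ∧
    IntegrableOn
      (fun p : Pt n => p.2 ^ 2 * ‖p.1‖ ^ 4 / ((1 + p.2) ^ 2 + ‖p.1‖ ^ 2) ^ n)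
      (upperHalf n) volume ∧
    (∫ p in upperHalf n, p.2 ^ 4 * ‖p.1‖ ^ 2 / ((1 + p.2) ^ 2 + ‖p.1‖ ^ 2) ^ n) =
      (12 / (((n : ℝ) - 2) * ((n : ℝ) + 1))) *
        ∫ p in upperHalf n, p.2 ^ 2 * ‖p.1‖ ^ 4 / ((1 + p.2) ^ 2 + ‖p.1‖ ^ 2) ^ n := by
  obtain ⟨m, rfl⟩ : ∃ m, n = m + 7 := ⟨n - 7, by omega⟩
  have hE : Module.finrank ℝ (EuclideanSpace ℝ (Fin (m + 7 - 1))) = m + 6 := by simp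
  obtain ⟨a1, b1⟩ := aux_main m 1 4 (m + 6) hE (by norm_num) (by ring) (by omega)
  obtain ⟨a2, b2⟩ := aux_main m 2 2 (m + 4) hE (by norm_num) (by ring) (by omega)
  refine ⟨a1, a2, ?_⟩
  have hr := aux_rad_eq m
  have ht := aux_t_eq m
  refine Eq.trans b1 ?_
  refine Eq.trans ?_ (congrArg _ b2.symm)
  simp only [show m + 5 + 2 * 1 = m + 7 by ring, show m + 5 + 2 * 2 = m + 9 by ring]
  generalize (∫ r in Ioi (0:ℝ), r ^ (m + 7) / (1 + r ^ 2) ^ (m + 7)) = A at *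
  generalize (∫ r in Ioi (0:ℝ), r ^ (m + 9) / (1 + r ^ 2) ^ (m + 7)) = B at *
  generalize (∫ t in Ioi (0:ℝ), t ^ 4 / (1 + t) ^ (m + 6)) = T at *
  generalize (∫ t in Ioi (0:ℝ), t ^ 2 / (1 + t) ^ (m + 4)) = U at *
  generalize volume.real (Metric.ball (0 : EuclideanSpace ℝ (Fin (m + 7 - 1))) 1) = V
  have h5 : (m : ℝ) + 5 ≠ 0 := by positivity
  have h4 : (m : ℝ) + 4 ≠ 0 := by positivity
  have h8 : (m : ℝ) + 8 ≠ 0 := by positivity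
  have hA : A = (m + 4) * B / (m + 8) := by field_simp; linarith
  have hT : T = 12 * U / ((m + 5) * (m + 4)) := by field_simp; linarith
  push_cast
  rw [hA, hT, show (m : ℝ) + 7 - 2 = m + 5 by ring, show (m : ℝ) + 7 + 1 = m + 8 by ring]
  field_simp
end
end

section
/- Let n ≥ 4 be an integer and let A_{ikjl} and B_{ij} (1 ≤ i,j,k,l ≤ n-1) be arbitrary real constants. Then for every m ∈ {1,…,n-1}, ∫_{ℝ^n_+} f_{A,B}(y) · ∂U/∂z_m(y) dy = 0. -/
open MeasureTheory

noncomputable section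

/-- `f_{A,B}(y) = Σ_{i,j} ((1/3) Σ_{k,l} A_{ikjl} y_k y_l + B_{ij} y_n²) ∂²U/∂y_i∂y_j`. -/
def fAB (n : ℕ) (A : Fin (n - 1) → Fin (n - 1) → Fin (n - 1) → Fin (n - 1) → ℝ)
    (B : Fin (n - 1) → Fin (n - 1) → ℝ) (p : Pt n) : ℝ :=
  ∑ i : Fin (n - 1), ∑ j : Fin (n - 1),
    ((1 / 3) * (∑ k : Fin (n - 1), ∑ l : Fin (n - 1), A i k j l * p.1 k * p.1 l) +
        B i j * p.2 ^ 2) *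
      pd (ez n i) (pd (ez n j) (stdBubble n)) p

/-- Horizontal reflection. -/
def refl7 (n : ℕ) : Pt n ≃L[ℝ] Pt n :=
  (ContinuousLinearEquiv.neg ℝ).prodCongr (ContinuousLinearEquiv.refl ℝ ℝ)

lemma refl7_apply (n : ℕ) (p : Pt n) : refl7 n p = (-p.1, p.2) := rfl

lemma refl7_ez (n : ℕ) (i : Fin (n - 1)) : refl7 n (ez n i) = - ez n i := by
  simp [refl7_apply, ez]

lemma pd_refl7 (n : ℕ) (i : Fin (n - 1)) (f : Pt n → ℝ) (c : ℝ)
    (hf : ∀ p, f (refl7 n p) = c * f p) (p : Pt n) :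
    pd (ez n i) f (refl7 n p) = - c * pd (ez n i) f p := by
  have h1 : f ∘ (refl7 n) = fun p => c * f p := funext hf
  have h2 := (refl7 n).comp_right_fderiv (f := f) (x := p)
  rw [h1] at h2
  have h3 := congrArg (fun L => L (ez n i)) h2
  have h4 : fderiv ℝ (fun p => c * f p) p = c • fderiv ℝ f p := by
    have := congrFun (fderiv_const_smul_field (𝕜 := ℝ) (f := f) c) p
    simpa [Pi.smul_def] using this
  rw [h4] at h3
  simp [refl7_ez] at h3
  unfold pd
  linarith

lemma mp_refl7 (n : ℕ) : MeasurePreserving (refl7 n) volume volume :=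
  (Measure.measurePreserving_neg (volume : Measure (EuclideanSpace ℝ (Fin (n - 1))))).prod
    (MeasurePreserving.id (volume : Measure ℝ))

lemma bubble_refl7 (n : ℕ) (p : Pt n) :
    stdBubble n (refl7 n p) = 1 * stdBubble n p := by
  simp [stdBubble, refl7_apply]

/-- for arbitrary constants `A`, `B` and every `m ∈ {1,…,n-1}`,
`∫_{ℝ^n_+} f_{A,B}(y) ∂U/∂z_m(y) dy = 0`. -/
theorem stmt7 (n : ℕ) (hn : 4 ≤ n)
    (A : Fin (n - 1) → Fin (n - 1) → Fin (n - 1) → Fin (n - 1) → ℝ)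
    (B : Fin (n - 1) → Fin (n - 1) → ℝ) (m : Fin (n - 1)) :
    (∫ p in upperHalf n, fAB n A B p * pd (ez n m) (stdBubble n) p) = 0 := by
  have hme : MeasurableEmbedding (refl7 n) :=
    (refl7 n).toHomeomorph.measurableEmbedding
  have h1 : ∀ (i : Fin (n - 1)) (p : Pt n), pd (ez n i) (stdBubble n) (refl7 n p)
      = (-1) * pd (ez n i) (stdBubble n) p := fun i p =>
    pd_refl7 n i _ 1 (bubble_refl7 n) p
  have h2 : ∀ (i j : Fin (n - 1)) (p : Pt n),
      pd (ez n i) (pd (ez n j) (stdBubble n)) (refl7 n p)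
      = pd (ez n i) (pd (ez n j) (stdBubble n)) p := fun i j p => by
    rw [pd_refl7 n i _ (-1) (h1 j) p]; ring
  have h3 : ∀ p, fAB n A B (refl7 n p) = fAB n A B p := fun p => by
    unfold fAB
    simp only [h2]
    simp [refl7_apply]
  have h := (mp_refl7 n).setIntegral_preimage_emb hme
    (fun p => fAB n A B p * pd (ez n m) (stdBubble n) p) (upperHalf n)
  have hs : refl7 n ⁻¹' upperHalf n = upperHalf n := rfl
  rw [hs] at h
  simp only [h1, h3, neg_mul, one_mul, mul_neg, integral_neg] at h
  linarith
end
end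

section
/- Let n ≥ 5 be an integer and let A_{ikjl} and B_{ij} (1 ≤ i,j,k,l ≤ n-1) be real constants satisfying A_{ikjl} = -A_{kijl} and A_{ikjl} = -A_{iklj} for all indices, Σ_{i,k=1}^{n-1} A_{ikik} = 0, and Σ_{i=1}^{n-1} B_{ii} = 0. Then ∫_{ℝ^n_+} f_{A,B}(y) · U(y) dy = 0 and ∫_{ℝ^n_+} f_{A,B}(y) · j_n(y) dy = 0, where j_n = ((n-2)/2)·U + Σ_{a=1}^{n} y_a · ∂U/∂y_a. -/
open MeasureTheory

noncomputable section

/-- `j_n = ((n-2)/2) U + Σ_{a=1}^n y_a ∂U/∂y_a`, where `y = (z,t)`. -/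
def jlast (n : ℕ) (p : Pt n) : ℝ :=
  (((n : ℝ) - 2) / 2) * stdBubble n p +
    ((∑ i : Fin (n - 1), p.1 i * pd (ez n i) (stdBubble n) p) +
      p.2 * pd (et n) (stdBubble n) p)

theorem aux_integral_zero (m : ℕ) [NeZero m]
    (q : Fin m → Fin m → ℝ → ℝ → ℝ) (hq : ∀ r t, ∑ k, q k k r t = 0) :
    ∫ p in {p : EuclideanSpace ℝ (Fin m) × ℝ | 0 < p.2},
      ∑ k, ∑ l, q k l ‖p.1‖ p.2 * (p.1 k * p.1 l) = 0 := by
  set S : Set (EuclideanSpace ℝ (Fin m) × ℝ) := {p | 0 < p.2} with hS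
  set F : EuclideanSpace ℝ (Fin m) × ℝ → ℝ :=
    fun p => ∑ k, ∑ l, q k l ‖p.1‖ p.2 * (p.1 k * p.1 l) with hF
  by_cases hint : IntegrableOn F S
  swap
  · exact integral_undef hint
  let sg : ℤˣ → (ℝ ≃ₗᵢ[ℝ] ℝ) := fun u =>
    if u = 1 then LinearIsometryEquiv.refl ℝ ℝ else LinearIsometryEquiv.neg ℝ
  have hsg : ∀ (u : ℤˣ) (x : ℝ), sg u x = ((u : ℤ) : ℝ) * x := by
    intro u x
    rcases Int.units_eq_one_or u with rfl | rfl
    · simp [sg]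
    · simp [sg]
  let T : (Fin m → ℤˣ) × Fin m → (EuclideanSpace ℝ (Fin m) ≃ₗᵢ[ℝ] EuclideanSpace ℝ (Fin m)) :=
    fun g => (LinearIsometryEquiv.piLpCongrLeft 2 ℝ ℝ (Equiv.addRight g.2).symm).trans
      (LinearIsometryEquiv.piLpCongrRight 2 (fun i => sg (g.1 i)))
  have hT : ∀ g z i, T g z i = (((g.1 i : ℤˣ) : ℤ) : ℝ) * z (i + g.2) := by
    intro g z i
    simp [T, hsg, Equiv.piCongrLeft', LinearIsometryEquiv.piLpCongrLeft_apply]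
  have hmp : ∀ g, MeasurePreserving (Prod.map (T g) (id : ℝ → ℝ)) := fun g =>
    (T g).measurePreserving.prod (MeasurePreserving.id _)
  have hemb : ∀ g, MeasurableEmbedding (Prod.map (T g) (id : ℝ → ℝ)) := fun g =>
    ((T g).toHomeomorph.toMeasurableEquiv.prodCongr (MeasurableEquiv.refl ℝ)).measurableEmbedding
  have hpre : ∀ g, (Prod.map (T g) (id : ℝ → ℝ)) ⁻¹' S = S := by
    intro g; ext p; simp [hS]
  have h1 : ∀ g, ∫ p in S, F (Prod.map (T g) id p) = ∫ p in S, F p := by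
    intro g
    have := (hmp g).setIntegral_preimage_emb (hemb g) F S
    rwa [hpre] at this
  have h2 : ∀ g, IntegrableOn (fun p => F (Prod.map (T g) id p)) S := by
    intro g
    have := ((hmp g).integrableOn_comp_preimage (hemb g) (f := F) (s := S)).2 hint
    rwa [hpre] at this
  have hsgn : ∀ k l : Fin m, k ≠ l →
      ∑ e : Fin m → ℤˣ, (((e k : ℤˣ) : ℤ) : ℝ) * (((e l : ℤˣ) : ℤ) : ℝ) = 0 := by
    intro k l hkl
    have := Equiv.sum_comp (Equiv.mulRight (Pi.mulSingle k (-1) : Fin m → ℤˣ))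
      (fun e : Fin m → ℤˣ => (((e k : ℤˣ) : ℤ) : ℝ) * (((e l : ℤˣ) : ℤ) : ℝ))
    simp [Pi.mulSingle_eq_of_ne hkl.symm] at this
    linarith
  have hsq : ∀ u : ℤˣ, ((u : ℤ) : ℝ) * ((u : ℤ) : ℝ) = 1 := by
    intro u
    rcases Int.units_eq_one_or u with rfl | rfl <;> simp
  have h3 : ∀ p, ∑ g, F (Prod.map (T g) id p) = 0 := by
    intro p
    have e1 : ∀ k l : Fin m, ∑ g, (T g p.1 k * T g p.1 l) =
        if k = l then (Fintype.card (Fin m → ℤˣ) : ℝ) * ∑ c, p.1 c * p.1 c else 0 := by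
      intro k l
      have e2 : ∑ g, (T g p.1 k * T g p.1 l) =
        (∑ e : Fin m → ℤˣ, (((e k : ℤˣ) : ℤ) : ℝ) * (((e l : ℤˣ) : ℤ) : ℝ)) *
          ∑ c, p.1 (k + c) * p.1 (l + c) := by
        rw [Finset.sum_mul_sum, ← Finset.univ_product_univ, Finset.sum_product]
        refine Finset.sum_congr rfl fun e _ => Finset.sum_congr rfl fun c _ => ?_
        rw [hT, hT]; ring
      rw [e2]
      split_ifs with h
      · subst h
        congr 1
        · simp [hsq]
        · exact Equiv.sum_comp (Equiv.addLeft k) (fun c => p.1 c * p.1 c)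
      · rw [hsgn k l h, zero_mul]
    have e3 : ∑ g, F (Prod.map (T g) id p) =
        ∑ k, ∑ l, q k l ‖p.1‖ p.2 * ∑ g, (T g p.1 k * T g p.1 l) := by
      simp only [hF, Prod.map_fst, Prod.map_snd, id, LinearIsometryEquiv.norm_map]
      rw [Finset.sum_comm]
      refine Finset.sum_congr rfl fun k _ => ?_
      rw [Finset.sum_comm]
      refine Finset.sum_congr rfl fun l _ => ?_
      rw [Finset.mul_sum]
    rw [e3]
    simp only [e1, mul_ite, mul_zero, Finset.sum_ite_eq, Finset.mem_univ, if_true]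
    rw [← Finset.sum_mul, hq, zero_mul]
  have h4 : ∑ g : (Fin m → ℤˣ) × Fin m, ∫ p in S, F (Prod.map (T g) id p) = 0 := by
    rw [← integral_finsetSum _ (fun g _ => h2 g)]
    simp [h3]
  simp only [h1, Finset.sum_const, nsmul_eq_mul] at h4
  rcases mul_eq_zero.1 h4 with h | h
  · exfalso
    have : (Finset.univ : Finset ((Fin m → ℤˣ) × Fin m)).Nonempty := Finset.univ_nonempty
    have := this.card_pos
    have h' : (Finset.univ : Finset ((Fin m → ℤˣ) × Fin m)).card = 0 := by exact_mod_cast h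
    omega
  · exact h

theorem aux_hasFDerivAt (n : ℕ) (c : ℝ) (p : Pt n) (hp : 0 < p.2) (v : Pt n) :
    DifferentiableAt ℝ (fun p : Pt n => ((1 + p.2) ^ 2 + ‖p.1‖ ^ 2) ^ c) p ∧
    fderiv ℝ (fun p : Pt n => ((1 + p.2) ^ 2 + ‖p.1‖ ^ 2) ^ c) p v =
      c * ((1 + p.2) ^ 2 + ‖p.1‖ ^ 2) ^ (c - 1) *
        (2 * (1 + p.2) * v.2 + 2 * inner ℝ p.1 v.1) := by
  have h1 : HasFDerivAt (fun p : Pt n => 1 + p.2) (ContinuousLinearMap.snd ℝ _ ℝ) p :=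
    hasFDerivAt_snd.const_add 1
  have h2 : HasFDerivAt (fun p : Pt n => ‖p.1‖ ^ 2) _ p := (hasFDerivAt_fst).norm_sq
  have h3 := (h1.pow 2).add h2
  have hpos : (1 + p.2) ^ 2 + ‖p.1‖ ^ 2 ≠ 0 := by positivity
  have h4 := h3.rpow_const (p := c) (Or.inl hpos)
  refine ⟨h4.differentiableAt, ?_⟩
  have h5 := h4.fderiv
  have h6 := congrArg (fun L => L v) h5
  refine h6.trans ?_
  simp
  try ring

theorem aux_pd_ez (n : ℕ) (p : Pt n) (hp : 0 < p.2) (i : Fin (n - 1)) :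
    pd (ez n i) (stdBubble n) p =
      (-(((n : ℝ) - 2) / 2)) * ((1 + p.2) ^ 2 + ‖p.1‖ ^ 2) ^ (-(((n : ℝ) - 2) / 2) - 1) *
        (2 * p.1 i) := by
  have := (aux_hasFDerivAt n (-(((n : ℝ) - 2) / 2)) p hp (ez n i)).2
  unfold pd
  refine this.trans ?_
  simp [ez, EuclideanSpace.inner_single_right]

theorem aux_pd_et (n : ℕ) (p : Pt n) (hp : 0 < p.2) :
    pd (et n) (stdBubble n) p =
      (-(((n : ℝ) - 2) / 2)) * ((1 + p.2) ^ 2 + ‖p.1‖ ^ 2) ^ (-(((n : ℝ) - 2) / 2) - 1) *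
        (2 * (1 + p.2)) := by
  have := (aux_hasFDerivAt n (-(((n : ℝ) - 2) / 2)) p hp (et n)).2
  unfold pd
  refine this.trans ?_
  simp [et]

theorem aux_pd_pd (n : ℕ) (p : Pt n) (hp : 0 < p.2) (i j : Fin (n - 1)) :
    ∀ c : ℝ, c = -(((n : ℝ) - 2) / 2) →
    pd (ez n i) (pd (ez n j) (stdBubble n)) p =
      4 * c * (c - 1) * ((1 + p.2) ^ 2 + ‖p.1‖ ^ 2) ^ (c - 2) * (p.1 i * p.1 j) +
      2 * c * ((1 + p.2) ^ 2 + ‖p.1‖ ^ 2) ^ (c - 1) * (if i = j then 1 else 0) := by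
  intro c hc
  have hopen : IsOpen {p : Pt n | 0 < p.2} := isOpen_lt continuous_const continuous_snd
  have hev : pd (ez n j) (stdBubble n) =ᶠ[nhds p] fun p : Pt n =>
      ((1 + p.2) ^ 2 + ‖p.1‖ ^ 2) ^ (c - 1) * (2 * c * p.1 j) := by
    filter_upwards [hopen.mem_nhds hp] with x hx
    rw [aux_pd_ez n x hx, ← hc]; ring
  unfold pd at hev ⊢
  rw [hev.fderiv_eq]
  obtain ⟨hd, hv⟩ := aux_hasFDerivAt n (c - 1) p hp (ez n i)
  have hl : HasFDerivAt (fun p : Pt n => 2 * c * p.1 j)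
      ((2 * c) • ((EuclideanSpace.proj j : EuclideanSpace ℝ (Fin (n - 1)) →L[ℝ] ℝ).comp
        (ContinuousLinearMap.fst ℝ _ ℝ))) p := by
    have := ((EuclideanSpace.proj j : EuclideanSpace ℝ (Fin (n - 1)) →L[ℝ] ℝ).comp
        (ContinuousLinearMap.fst ℝ (EuclideanSpace ℝ (Fin (n - 1))) ℝ)).hasFDerivAt (x := p)
    exact this.const_mul (2 * c)
  have h := (hd.hasFDerivAt.mul hl).fderiv
  have h6 := congrArg (fun L => L (ez n i)) h
  refine h6.trans ?_
  have e : c - 1 - 1 = c - 2 := by ring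
  rw [e] at hv
  simp [hv]
  simp [ez, EuclideanSpace.inner_single_right, Pi.single_apply, eq_comm]
  split_ifs <;> ring

theorem aux_fAB (n : ℕ)
    (A : Fin (n - 1) → Fin (n - 1) → Fin (n - 1) → Fin (n - 1) → ℝ)
    (B : Fin (n - 1) → Fin (n - 1) → ℝ)
    (hA1 : ∀ i k j l, A i k j l = -A k i j l)
    (hB : (∑ i : Fin (n - 1), B i i) = 0) (p : Pt n) (hp : 0 < p.2) (c : ℝ)
    (hc : c = -(((n : ℝ) - 2) / 2)) :
    fAB n A B p = ∑ k, ∑ l,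
      (2 * c * ((1 + p.2) ^ 2 + ‖p.1‖ ^ 2) ^ (c - 1) * (1 / 3) * (∑ i, A i k i l) +
       4 * c * (c - 1) * ((1 + p.2) ^ 2 + ‖p.1‖ ^ 2) ^ (c - 2) * p.2 ^ 2 * B k l)
        * (p.1 k * p.1 l) := by
  unfold fAB
  simp only [aux_pd_pd n p hp _ _ c hc]
  generalize ((1 + p.2) ^ 2 + ‖p.1‖ ^ 2) ^ (c - 1) = X
  generalize ((1 + p.2) ^ 2 + ‖p.1‖ ^ 2) ^ (c - 2) = Y
  generalize p.2 = t
  generalize p.1 = z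
  have hA0 : ∑ i, ∑ j, (∑ k, ∑ l, A i k j l * z k * z l) * (z i * z j) = 0 := by
    have e : ∑ i, ∑ j, (∑ k, ∑ l, A i k j l * z k * z l) * (z i * z j) =
        ∑ i, ∑ k, ∑ j, ∑ l, A i k j l * z k * z l * (z i * z j) := by
      refine Finset.sum_congr rfl fun i _ => ?_
      simp only [Finset.sum_mul]
      rw [Finset.sum_comm]
    have e' : ∑ i, ∑ k, ∑ j, ∑ l, A i k j l * z k * z l * (z i * z j) =
        - ∑ i, ∑ k, ∑ j, ∑ l, A i k j l * z k * z l * (z i * z j) := by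
      conv_lhs => rw [Finset.sum_comm]
      simp only [← Finset.sum_neg_distrib]
      refine Finset.sum_congr rfl fun i _ => Finset.sum_congr rfl fun k _ =>
        Finset.sum_congr rfl fun j _ => Finset.sum_congr rfl fun l _ => ?_
      rw [hA1 k i j l]; ring
    rw [e]; linarith
  have split : ∑ i, ∑ j, ((1 / 3) * (∑ k, ∑ l, A i k j l * z k * z l) + B i j * t ^ 2) *
      (4 * c * (c - 1) * Y * (z i * z j) + 2 * c * X * (if i = j then 1 else 0)) =
      4 * c * (c - 1) * Y * (1 / 3) *
        (∑ i, ∑ j, (∑ k, ∑ l, A i k j l * z k * z l) * (z i * z j)) +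
      4 * c * (c - 1) * Y * t ^ 2 * (∑ i, ∑ j, B i j * (z i * z j)) +
      2 * c * X * (1 / 3) * (∑ i, ∑ k, ∑ l, A i k i l * z k * z l) +
      2 * c * X * t ^ 2 * ∑ i, B i i := by
    have e1 : ∀ i, (∑ k, ∑ l, A i k i l * z k * z l) =
      ∑ j, (∑ k, ∑ l, A i k j l * z k * z l) * (if i = j then 1 else 0) := by
      intro i; simp
    have e2 : ∀ i, B i i = ∑ j, B i j * (if i = j then 1 else 0) := by
      intro i; simp
    simp only [e1]
    rw [Finset.sum_congr rfl (fun i _ => e2 i)]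
    simp only [Finset.mul_sum (s := Finset.univ (α := Fin (n-1))) (a := 4 * c * (c - 1) * Y * (1 / 3))]
    generalize hK : (fun i j => ∑ k, ∑ l, A i k j l * z k * z l) = K
    have hK' : ∀ i j, ∑ k, ∑ l, A i k j l * z k * z l = K i j := fun i j => by rw [← hK]
    simp only [hK', Finset.mul_sum, ← Finset.sum_add_distrib]
    refine Finset.sum_congr rfl fun i _ => Finset.sum_congr rfl fun j _ => ?_
    ring
  rw [split, hA0, hB]
  have e3 : ∑ i, ∑ k, ∑ l, A i k i l * z k * z l =
      ∑ k, ∑ l, (∑ i, A i k i l) * (z k * z l) := by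
    rw [Finset.sum_comm]
    refine Finset.sum_congr rfl fun k _ => ?_
    rw [Finset.sum_comm]
    refine Finset.sum_congr rfl fun l _ => ?_
    rw [Finset.sum_mul]
    exact Finset.sum_congr rfl fun i _ => by ring
  rw [e3, mul_zero, mul_zero, add_zero, zero_add, Finset.mul_sum, Finset.mul_sum,
    ← Finset.sum_add_distrib]
  refine Finset.sum_congr rfl fun k _ => ?_
  rw [Finset.mul_sum, Finset.mul_sum, ← Finset.sum_add_distrib]
  exact Finset.sum_congr rfl fun l _ => by ring

theorem aux_jlast (n : ℕ) (p : Pt n) (hp : 0 < p.2) (c : ℝ)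
    (hc : c = -(((n : ℝ) - 2) / 2)) :
    jlast n p = -c * ((1 + p.2) ^ 2 + ‖p.1‖ ^ 2) ^ c +
      2 * c * ((1 + p.2) ^ 2 + ‖p.1‖ ^ 2) ^ (c - 1) * (‖p.1‖ ^ 2 + p.2 * (1 + p.2)) := by
  unfold jlast
  simp only [aux_pd_ez n p hp, aux_pd_et n p hp, stdBubble, ← hc]
  have hn2 : ((n : ℝ) - 2) / 2 = -c := by rw [hc]; ring
  have : ∀ X : ℝ, ∑ i, p.1 i * (c * X * (2 * p.1 i)) = 2 * c * X * ‖p.1‖ ^ 2 := by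
    intro X
    rw [EuclideanSpace.real_norm_sq_eq p.1, Finset.mul_sum]
    exact Finset.sum_congr rfl fun i _ => by ring
  rw [this, hn2]; ring

theorem aux_main_s8 (n : ℕ) (hn : 5 ≤ n)
    (A : Fin (n - 1) → Fin (n - 1) → Fin (n - 1) → Fin (n - 1) → ℝ)
    (B : Fin (n - 1) → Fin (n - 1) → ℝ)
    (hA1 : ∀ i k j l, A i k j l = -A k i j l)
    (hA3 : (∑ i : Fin (n - 1), ∑ k : Fin (n - 1), A i k i k) = 0)
    (hB : (∑ i : Fin (n - 1), B i i) = 0) (G : Pt n → ℝ) (g : ℝ → ℝ → ℝ)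
    (hG : ∀ p : Pt n, 0 < p.2 → G p = g ‖p.1‖ p.2) :
    (∫ p in upperHalf n, fAB n A B p * G p) = 0 := by
  haveI : NeZero (n - 1) := ⟨by omega⟩
  obtain ⟨c, hc⟩ : ∃ c : ℝ, c = -(((n : ℝ) - 2) / 2) := ⟨_, rfl⟩
  have key := aux_integral_zero (n - 1) (fun k l r t =>
      (2 * c * ((1 + t) ^ 2 + r ^ 2) ^ (c - 1) * (1 / 3) * (∑ i, A i k i l) +
       4 * c * (c - 1) * ((1 + t) ^ 2 + r ^ 2) ^ (c - 2) * t ^ 2 * B k l) * g r t) (by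
    intro r t
    rw [← Finset.sum_mul, Finset.sum_add_distrib, ← Finset.mul_sum, ← Finset.mul_sum, hB,
      Finset.sum_comm, hA3]
    ring)
  rw [← key]
  have hms : MeasurableSet (upperHalf n) := measurableSet_lt measurable_const measurable_snd
  refine setIntegral_congr_fun hms ?_
  intro p hp
  have hp' : 0 < p.2 := hp
  simp only []
  rw [aux_fAB n A B hA1 hB p hp' c hc, hG p hp', Finset.sum_mul]
  refine Finset.sum_congr rfl fun k _ => ?_
  rw [Finset.sum_mul]
  exact Finset.sum_congr rfl fun l _ => by ring

/-- under the curvature-type symmetries of `A` and trace conditions,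
`∫ f_{A,B} U = 0` and `∫ f_{A,B} j_n = 0`. -/
theorem stmt8 (n : ℕ) (hn : 5 ≤ n)
    (A : Fin (n - 1) → Fin (n - 1) → Fin (n - 1) → Fin (n - 1) → ℝ)
    (B : Fin (n - 1) → Fin (n - 1) → ℝ)
    (hA1 : ∀ i k j l, A i k j l = -A k i j l)
    (hA2 : ∀ i k j l, A i k j l = -A i k l j)
    (hA3 : (∑ i : Fin (n - 1), ∑ k : Fin (n - 1), A i k i k) = 0)
    (hB : (∑ i : Fin (n - 1), B i i) = 0) :
    (∫ p in upperHalf n, fAB n A B p * stdBubble n p) = 0 ∧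
    (∫ p in upperHalf n, fAB n A B p * jlast n p) = 0 := by
  obtain ⟨c, hc⟩ : ∃ c : ℝ, c = -(((n : ℝ) - 2) / 2) := ⟨_, rfl⟩
  refine ⟨aux_main_s8 n hn A B hA1 hA3 hB _ (fun r t => ((1 + t) ^ 2 + r ^ 2) ^ c) ?_,
    aux_main_s8 n hn A B hA1 hA3 hB _ (fun r t => -c * ((1 + t) ^ 2 + r ^ 2) ^ c +
      2 * c * ((1 + t) ^ 2 + r ^ 2) ^ (c - 1) * (r ^ 2 + t * (1 + t))) ?_⟩
  · intro p _
    rw [hc]; rfl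
  · intro p hp
    exact aux_jlast n p hp c hc
end
end
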